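/- arXiv:1010.4613 — 3 statements merged into one kernel-verified Lean document; each statement's English description precedes it below -/
import Mathlib

section
/- For every natural number n ≥ 3 there exists a natural number M such that every finite family of at least M pairwise disjoint nonempty compact convex subsets of ℝ² that is in general position contains a subfamily of n sets in convex position. -/
open Set

noncomputable section

/-- The Euclidean plane. -/
abbrev Plane : Type := EuclideanSpace ℝ (Fin 2)

/-- The 2×2 determinant of two plane vectors. -/
def det2 (u v : Plane) : ℝ := u 0 * v 1 - u 1 * v 0

/-- A convex body in the plane: nonempty, compact and convex. -/
def ConvexBody2 (A : Set Plane) : Prop := A.Nonempty ∧ IsCompact A ∧ Convex ℝ A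

/-- A family of sets is in convex position if removing any member changes the
convex hull of the union of the family. -/
def ConvexPos (F : Set (Set Plane)) : Prop :=
  ∀ A ∈ F, convexHull ℝ (⋃₀ F) ≠ convexHull ℝ (⋃₀ (F \ {A}))

/-- A family is in general position if every 3-element subfamily is in convex position. -/
def GenPos (F : Set (Set Plane)) : Prop :=
  ∀ G ⊆ F, G.ncard = 3 → ConvexPos G

/-- Two sets are noncrossing if both set differences are connected. -/
def NoncrossingPair (A B : Set Plane) : Prop := IsConnected (A \ B) ∧ IsConnected (B \ A)

/-- Two convex bodies are tangent if they intersect but their interiors are disjoint. -/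
def TangentBodies (A B : Set Plane) : Prop :=
  (A ∩ B).Nonempty ∧ interior A ∩ interior B = ∅

/-- The line `{x | f x = c}` (for `f ≠ 0`) is tangent to `A`:
it meets `A` and `A` lies in one of the two closed half-planes it bounds. -/
def TangentLineTo (f : Plane →ₗ[ℝ] ℝ) (c : ℝ) (A : Set Plane) : Prop :=
  (∃ x ∈ A, f x = c) ∧ ((∀ x ∈ A, f x ≤ c) ∨ (∀ x ∈ A, c ≤ f x))

/-- No line is tangent to three distinct members of the family. -/
def NoTripleTangentLine (F : Set (Set Plane)) : Prop :=
  ∀ f : Plane →ₗ[ℝ] ℝ, f ≠ 0 → ∀ c : ℝ, ∀ A ∈ F, ∀ B ∈ F, ∀ C ∈ F,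
    A ≠ B → B ≠ C → A ≠ C →
    ¬ (TangentLineTo f c A ∧ TangentLineTo f c B ∧ TangentLineTo f c C)

/-- The ordered triple `(A₁, A₂, A₃)` is counterclockwise oriented. -/
def CCWOriented (A₁ A₂ A₃ : Set Plane) : Prop :=
  ∃ a₁ ∈ A₁ ∩ frontier (convexHull ℝ (A₁ ∪ A₂ ∪ A₃)),
  ∃ a₂ ∈ A₂ ∩ frontier (convexHull ℝ (A₁ ∪ A₂ ∪ A₃)),
  ∃ a₃ ∈ A₃ ∩ frontier (convexHull ℝ (A₁ ∪ A₂ ∪ A₃)),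
    0 < det2 (a₂ - a₁) (a₃ - a₁)

/-- The ordered triple `(A₁, A₂, A₃)` is clockwise oriented. -/
def CWOriented (A₁ A₂ A₃ : Set Plane) : Prop :=
  ∃ a₁ ∈ A₁ ∩ frontier (convexHull ℝ (A₁ ∪ A₂ ∪ A₃)),
  ∃ a₂ ∈ A₂ ∩ frontier (convexHull ℝ (A₁ ∪ A₂ ∪ A₃)),
  ∃ a₃ ∈ A₃ ∩ frontier (convexHull ℝ (A₁ ∪ A₂ ∪ A₃)),
    det2 (a₂ - a₁) (a₃ - a₁) < 0

/-- An affine line in the plane: an affine subspace with 1-dimensional direction. -/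
def IsLine (L : AffineSubspace ℝ Plane) : Prop := Module.finrank ℝ L.direction = 1

/-- `L` is a transversal line of the family `F`. -/
def TransversalLine (L : AffineSubspace ℝ Plane) (F : Set (Set Plane)) : Prop :=
  IsLine L ∧ ∀ A ∈ F, ((L : Set Plane) ∩ A).Nonempty

theorem ramsey_aux (k : ℕ) : ∀ p q : ℕ, ∃ N : ℕ,
    ∀ (α : Type) [DecidableEq α] (c : Finset α → Prop) (S : Finset α), N ≤ S.card →
    (∃ T ⊆ S, T.card = p ∧ ∀ U ⊆ T, U.card = k → c U) ∨
    (∃ T ⊆ S, T.card = q ∧ ∀ U ⊆ T, U.card = k → ¬ c U) := by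
  induction k with
  | zero =>
    intro p q
    refine ⟨max p q, fun α _ c S hS => ?_⟩
    by_cases h : c ∅
    · left
      obtain ⟨T, hT, hc⟩ := Finset.exists_subset_card_eq ((le_max_left p q).trans hS)
      refine ⟨T, hT, hc, fun U _ hU => ?_⟩
      rw [Finset.card_eq_zero] at hU; rwa [hU]
    · right
      obtain ⟨T, hT, hc⟩ := Finset.exists_subset_card_eq ((le_max_right p q).trans hS)
      refine ⟨T, hT, hc, fun U _ hU => ?_⟩
      rw [Finset.card_eq_zero] at hU; rwa [hU]
  | succ k ih =>
    have triv : ∀ (α : Type) [DecidableEq α] (c : Finset α → Prop), ∀ U ⊆ (∅ : Finset α), U.card = k + 1 → c U := by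
      intro α _ c U hU hc
      rw [Finset.subset_empty] at hU
      subst hU; simp at hc
    -- extension step
    have ext : ∀ (α : Type) [DecidableEq α] (c : Finset α → Prop) (x : α) (T V : Finset α), x ∉ V → T ⊆ V →
        (∀ U ⊆ V, U.card = k → c (insert x U)) → (∀ U ⊆ T, U.card = k + 1 → c U) →
        ∀ U ⊆ insert x T, U.card = k + 1 → c U := by
      intro α _ c x T V hxV hTV h1 h2 U hU hc
      by_cases hx : x ∈ U
      · have : U.erase x ⊆ V := fun y hy => by
          rw [Finset.mem_erase] at hy
          have := hU hy.2
          rw [Finset.mem_insert] at this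
          exact hTV (this.resolve_left hy.1)
        have h := h1 _ this (by rw [Finset.card_erase_of_mem hx, hc]; rfl)
        rwa [Finset.insert_erase hx] at h
      · exact h2 U (fun y hy => by
          have := hU hy
          rw [Finset.mem_insert] at this
          exact this.resolve_left (fun h => hx (h ▸ hy))) hc
    intro p
    induction p with
    | zero => exact fun q => ⟨0, fun α _ c S _ => Or.inl ⟨∅, by simp, rfl, triv α c⟩⟩
    | succ p ihp =>
      intro q
      induction q with
      | zero => exact ⟨0, fun α _ c S _ => Or.inr ⟨∅, by simp, rfl, triv α (fun U => ¬ c U)⟩⟩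
      | succ q ihq =>
        obtain ⟨N1, h1⟩ := ihp (q + 1)
        obtain ⟨N2, h2⟩ := ihq
        obtain ⟨N, hN⟩ := ih N1 N2
        refine ⟨N + 1, fun α _ c S hS => ?_⟩
        obtain ⟨x, hx⟩ : S.Nonempty := Finset.card_pos.mp (by omega)
        have hcard : N ≤ (S.erase x).card := by
          rw [Finset.card_erase_of_mem hx]; omega
        have hsub : S.erase x ⊆ S := Finset.erase_subset _ _
        rcases hN α (fun U => c (insert x U)) (S.erase x) hcard with ⟨V, hV, hVc, hVU⟩ | ⟨V, hV, hVc, hVU⟩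
        · have hxV : x ∉ V := fun h => by simpa using hV h
          rcases h1 α c V hVc.ge with ⟨T, hT, hTc, hTU⟩ | ⟨T, hT, hTc, hTU⟩
          · left
            refine ⟨insert x T, Finset.insert_subset hx (hT.trans (hV.trans hsub)), ?_, ext α c x T V hxV hT hVU hTU⟩
            rw [Finset.card_insert_of_notMem (fun h => hxV (hT h)), hTc]
          · exact Or.inr ⟨T, hT.trans (hV.trans hsub), hTc, hTU⟩
        · have hxV : x ∉ V := fun h => by simpa using hV h
          rcases h2 α c V hVc.ge with ⟨T, hT, hTc, hTU⟩ | ⟨T, hT, hTc, hTU⟩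
          · exact Or.inl ⟨T, hT.trans (hV.trans hsub), hTc, hTU⟩
          · right
            refine ⟨insert x T, Finset.insert_subset hx (hT.trans (hV.trans hsub)), ?_, ext α (fun U => ¬ c U) x T V hxV hT hVU hTU⟩
            rw [Finset.card_insert_of_notMem (fun h => hxV (hT h)), hTc]

/-- The linear functional in direction `θ`. -/
def dirL (θ : ℝ) (x : Plane) : ℝ := x 0 * Real.cos θ + x 1 * Real.sin θ

/-- The support function. -/
def supp (A : Set Plane) (θ : ℝ) : ℝ := sSup (dirL θ '' A)

theorem dirL_continuous : Continuous (Function.uncurry dirL) := by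
  unfold dirL Function.uncurry
  fun_prop

theorem supp_continuous {A : Set Plane} (hA : ConvexBody2 A) : Continuous (supp A) :=
  hA.2.1.continuous_sSup dirL_continuous

theorem supp_spec {A : Set Plane} (hA : ConvexBody2 A) (θ : ℝ) :
    ∃ x ∈ A, supp A θ = dirL θ x ∧ ∀ y ∈ A, dirL θ y ≤ dirL θ x :=
  hA.2.1.exists_sSup_image_eq_and_ge hA.1
    (dirL_continuous.comp (Continuous.prodMk continuous_const continuous_id)).continuousOn

theorem le_supp {A : Set Plane} (hA : ConvexBody2 A) (θ : ℝ) {y : Plane} (hy : y ∈ A) :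
    dirL θ y ≤ supp A θ := by
  obtain ⟨x, _, h, h'⟩ := supp_spec hA θ
  rw [h]; exact h' y hy

theorem supp_periodic (A : Set Plane) (θ : ℝ) : supp A (θ + 2 * Real.pi) = supp A θ := by
  have : dirL (θ + 2 * Real.pi) = dirL θ := by
    funext x; simp [dirL]
  simp [supp, this]

theorem dual_rep (f : StrongDual ℝ Plane) : ∃ r : ℝ, 0 ≤ r ∧ ∃ φ : ℝ, 0 ≤ φ ∧ φ ≤ 2 * Real.pi ∧
    ∀ x, f x = r * dirL φ x := by
  set a := f (EuclideanSpace.single 0 1) with ha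
  set b := f (EuclideanSpace.single 1 1) with hb
  have hf : ∀ x : Plane, f x = x 0 * a + x 1 * b := by
    intro x
    have hx : x = x 0 • (EuclideanSpace.single 0 1 : Plane) + x 1 • (EuclideanSpace.single 1 1 : Plane) := by
      ext i
      fin_cases i <;> simp
    conv_lhs => rw [hx]
    simp [ha, hb]
  set z : ℂ := ⟨a, b⟩ with hz
  have hre : ‖z‖ * Real.cos z.arg = a := by
    rw [Complex.norm_mul_cos_arg]
  have him : ‖z‖ * Real.sin z.arg = b := by
    rw [Complex.norm_mul_sin_arg]
  refine ⟨‖z‖, norm_nonneg _, ?_⟩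
  have h1 := Complex.neg_pi_lt_arg z
  have h2 := Complex.arg_le_pi z
  have hpi := Real.pi_pos
  by_cases h : 0 ≤ z.arg
  · refine ⟨z.arg, h, by linarith, fun x => ?_⟩
    rw [hf, ← hre, ← him, dirL]; ring
  · refine ⟨z.arg + 2 * Real.pi, by linarith, by linarith, fun x => ?_⟩
    rw [hf, ← hre, ← him, dirL, Real.cos_add_two_pi, Real.sin_add_two_pi]; ring

/-- Core monotonicity. -/
theorem core {A B : Set Plane} (hA : ConvexBody2 A) (hB : ConvexBody2 B) {φ θ₁ θ₂ c₁ c₂ c₃ : ℝ}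
    (hsep : ∀ a ∈ A, ∀ b ∈ B, dirL φ a < dirL φ b) (h1 : 0 < c₁) (h2 : 0 ≤ c₂) (h3 : 0 < c₃)
    (hid : ∀ x, c₁ * dirL θ₂ x = c₂ * dirL θ₁ x - c₃ * dirL φ x)
    (hg : supp B θ₁ ≤ supp A θ₁) : supp B θ₂ < supp A θ₂ := by
  obtain ⟨a, ha, ha', -⟩ := supp_spec hA θ₁
  obtain ⟨b, hb, hb', -⟩ := supp_spec hB θ₂
  have e1 := mul_le_mul_of_nonneg_left (le_supp hA θ₂ ha) h1.le
  have e2 := mul_le_mul_of_nonneg_left (le_supp hB θ₁ hb) h2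
  have e3 := mul_le_mul_of_nonneg_left hg h2
  have e4 := mul_lt_mul_of_pos_left (hsep a ha b hb) h3
  have ia := hid a
  have ib := hid b
  rw [← hb'] at ib
  rw [ha'] at e3
  have : c₁ * supp B θ₂ < c₁ * supp A θ₂ := by linarith
  exact lt_of_mul_lt_mul_left this h1.le

theorem dirL_id (φ α β : ℝ) (x : Plane) : Real.sin α * dirL (φ + β) x =
    Real.sin β * dirL (φ + α) x - Real.sin (β - α) * dirL φ x := by
  simp only [dirL, Real.cos_add, Real.sin_add, Real.sin_sub]
  have h1 := Real.sin_sq_add_cos_sq φ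
  ring

theorem sep_dir {A B : Set Plane} (hA : ConvexBody2 A) (hB : ConvexBody2 B) (hd : Disjoint A B) :
    ∃ φ : ℝ, 0 ≤ φ ∧ φ ≤ 2 * Real.pi ∧ ∀ a ∈ A, ∀ b ∈ B, dirL φ a < dirL φ b := by
  obtain ⟨f, u, v, h1, h2, h3⟩ := geometric_hahn_banach_compact_closed hA.2.2 hA.2.1 hB.2.2
    hB.2.1.isClosed hd
  obtain ⟨r, hr, φ, h0, h2π, hf⟩ := dual_rep f
  refine ⟨φ, h0, h2π, fun a ha b hb => ?_⟩
  have : f a < f b := by linarith [h1 a ha, h3 b hb]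
  rw [hf, hf] at this
  exact lt_of_mul_lt_mul_left this hr

theorem arc1 {A B : Set Plane} (hA : ConvexBody2 A) (hB : ConvexBody2 B) {φ : ℝ}
    (hsep : ∀ a ∈ A, ∀ b ∈ B, dirL φ a < dirL φ b) :
    ∃ p q : ℝ, φ < p ∧ p < q ∧ q < φ + 2 * Real.pi ∧ ∀ θ, φ ≤ θ → θ ≤ φ + 2 * Real.pi →
      (supp B θ < supp A θ ↔ p < θ ∧ θ < q) ∧ (supp A θ < supp B θ ↔ θ < p ∨ q < θ) := by
  have hpi := Real.pi_pos
  have gφ : supp A φ < supp B φ := by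
    obtain ⟨a, ha, ha', -⟩ := supp_spec hA φ
    obtain ⟨b, hb, hb', -⟩ := supp_spec hB φ
    rw [ha', hb']; exact hsep a ha b hb
  have gφ2 : supp A (φ + 2 * Real.pi) < supp B (φ + 2 * Real.pi) := by
    simpa only [supp_periodic] using gφ
  have gπ : supp B (φ + Real.pi) < supp A (φ + Real.pi) := by
    obtain ⟨a, ha⟩ := hA.1
    obtain ⟨b, hb, hb', -⟩ := supp_spec hB (φ + Real.pi)
    have h := hsep a ha b hb
    refine lt_of_lt_of_le ?_ (le_supp hA _ ha)
    rw [hb']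
    simp only [dirL, Real.cos_add_pi, Real.sin_add_pi] at h ⊢
    linarith
  -- monotonicity in the two halves
  have m1 : ∀ θ₁ θ₂, φ ≤ θ₁ → θ₁ < θ₂ → θ₂ ≤ φ + Real.pi → supp B θ₁ ≤ supp A θ₁ →
      supp B θ₂ < supp A θ₂ := by
    intro θ₁ θ₂ h1 h12 h2 hg
    have hne : φ < θ₁ := lt_of_le_of_ne h1 (by rintro rfl; linarith)
    refine core hA hB hsep (c₁ := Real.sin (θ₁ - φ)) (c₂ := Real.sin (θ₂ - φ))
      (c₃ := Real.sin (θ₂ - θ₁)) (Real.sin_pos_of_pos_of_lt_pi (by linarith) (by linarith))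
      (Real.sin_nonneg_of_nonneg_of_le_pi (by linarith) (by linarith))
      (Real.sin_pos_of_pos_of_lt_pi (by linarith) (by linarith)) (fun x => ?_) hg
    have := dirL_id φ (θ₁ - φ) (θ₂ - φ) x
    simpa using this
  have m2 : ∀ θ₁ θ₂, φ + Real.pi ≤ θ₁ → θ₁ < θ₂ → θ₂ ≤ φ + 2 * Real.pi → supp B θ₂ ≤ supp A θ₂ →
      supp B θ₁ < supp A θ₁ := by
    intro θ₁ θ₂ h1 h12 h2 hg
    have hne : θ₂ < φ + 2 * Real.pi := lt_of_le_of_ne h2 (by rintro rfl; linarith)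
    have s1 : Real.sin (θ₁ - φ) = - Real.sin (θ₁ - φ - Real.pi) := by
      rw [Real.sin_sub_pi, neg_neg]
    have s2 : Real.sin (θ₂ - φ) = - Real.sin (θ₂ - φ - Real.pi) := by
      rw [Real.sin_sub_pi, neg_neg]
    refine core hA hB hsep (c₁ := Real.sin (θ₂ - φ - Real.pi)) (c₂ := Real.sin (θ₁ - φ - Real.pi))
      (c₃ := Real.sin (θ₂ - θ₁)) (Real.sin_pos_of_pos_of_lt_pi (by linarith) (by linarith))
      (Real.sin_nonneg_of_nonneg_of_le_pi (by linarith) (by linarith))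
      (Real.sin_pos_of_pos_of_lt_pi (by linarith) (by linarith)) (fun x => ?_) hg
    have := dirL_id φ (θ₁ - φ) (θ₂ - φ) x
    rw [s1, s2] at this
    simp only [add_sub_cancel, sub_sub_sub_cancel_right] at this
    linarith
  have hc : Continuous (fun θ => supp A θ - supp B θ) :=
    (supp_continuous hA).sub (supp_continuous hB)
  obtain ⟨p, ⟨hp1, hp2⟩, hp⟩ := intermediate_value_Icc (by linarith : φ ≤ φ + Real.pi)
    hc.continuousOn (show (0:ℝ) ∈ Icc _ _ from ⟨by linarith, by linarith⟩)
  obtain ⟨q, ⟨hq1, hq2⟩, hq⟩ := intermediate_value_Icc' (by linarith : φ + Real.pi ≤ φ + 2 * Real.pi)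
    hc.continuousOn (show (0:ℝ) ∈ Icc _ _ from ⟨by linarith, by linarith⟩)
  simp only at hp hq
  have hp1' : φ < p := lt_of_le_of_ne hp1 (by rintro rfl; linarith)
  have hp2' : p < φ + Real.pi := lt_of_le_of_ne hp2 (by rintro rfl; linarith)
  have hq1' : φ + Real.pi < q := lt_of_le_of_ne hq1 (by rintro rfl; linarith)
  have hq2' : q < φ + 2 * Real.pi := lt_of_le_of_ne hq2 (by rintro rfl; linarith)
  have neg1 : ∀ θ, φ ≤ θ → θ < p → supp A θ < supp B θ := by
    intro θ h1 h2
    by_contra! h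
    linarith [m1 θ p h1 h2 hp2 h]
  have neg2 : ∀ θ, θ ≤ φ + 2 * Real.pi → q < θ → supp A θ < supp B θ := by
    intro θ h1 h2
    by_contra! h
    linarith [m2 q θ hq1 h2 h1 h]
  have pos : ∀ θ, p < θ → θ < q → supp B θ < supp A θ := by
    intro θ h1 h2
    rcases le_total θ (φ + Real.pi) with h | h
    · exact m1 p θ hp1 h1 h (by linarith)
    · exact m2 θ q h h2 hq2 (by linarith)
  refine ⟨p, q, hp1', by linarith, hq2', fun θ h1 h2 => ?_⟩
  rcases lt_trichotomy θ p with h | h | h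
  · have := neg1 θ h1 h
    constructor <;> constructor
    · intro; linarith
    · intro h; linarith [h.1]
    · intro; exact Or.inl h
    · intro; exact this
  · subst h
    constructor <;> constructor
    · intro; linarith
    · intro h; linarith [h.1]
    · intro; linarith
    · rintro (h | h) <;> linarith
  · rcases lt_trichotomy θ q with h' | h' | h'
    · have := pos θ h h'
      constructor <;> constructor
      · intro; exact ⟨h, h'⟩
      · intro; exact this
      · intro; linarith
      · rintro (h | h) <;> linarith
    · subst h'
      constructor <;> constructor
      · intro; linarith
      · intro h; linarith [h.2]
      · intro; linarith
      · rintro (h | h) <;> linarith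
    · have := neg2 θ h2 h'
      constructor <;> constructor
      · intro; linarith
      · intro h; linarith [h.2]
      · intro; exact Or.inr h'
      · intro; exact this

theorem arc2 {A B : Set Plane} (hA : ConvexBody2 A) (hB : ConvexBody2 B) (hd : Disjoint A B)
    (h0 : supp A 0 ≤ supp B 0) :
    ∃ s t : ℝ, 0 ≤ s ∧ s < t ∧ t ≤ 2 * Real.pi ∧ ∀ θ, 0 < θ → θ < 2 * Real.pi →
      (supp B θ < supp A θ ↔ s < θ ∧ θ < t) ∧ (supp A θ < supp B θ ↔ θ < s ∨ t < θ) := by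
  obtain ⟨φ, hφ0, hφ, hsep⟩ := sep_dir hA hB hd
  obtain ⟨p, q, h1, h2, h3, H⟩ := arc1 hA hB hsep
  have h2π : ¬ (supp B (2 * Real.pi) < supp A (2 * Real.pi)) := by
    have a1 := supp_periodic A 0
    have a2 := supp_periodic B 0
    rw [zero_add] at a1 a2
    rw [a1, a2]; exact not_lt.mpr h0
  rw [(H _ hφ (by linarith)).1] at h2π
  by_cases hq : q ≤ 2 * Real.pi
  · refine ⟨p, q, by linarith, h2, hq, fun θ t0 t1 => ?_⟩
    rcases le_or_gt φ θ with h | h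
    · exact H θ h (by linarith)
    · have := H (θ + 2 * Real.pi) (by linarith) (by linarith)
      rw [supp_periodic, supp_periodic] at this
      rw [this.1, this.2]
      constructor <;> constructor
      · rintro ⟨_, _⟩; constructor <;> linarith
      · rintro ⟨_, _⟩; constructor <;> linarith
      · intro; left; linarith
      · intro; right; linarith
  · have hp : 2 * Real.pi ≤ p := by
      by_contra! h
      exact h2π ⟨h, not_le.mp hq⟩
    refine ⟨p - 2 * Real.pi, q - 2 * Real.pi, by linarith, by linarith, by linarith, fun θ t0 t1 => ?_⟩
    rcases le_or_gt φ θ with h | h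
    · rw [(H θ h (by linarith)).1, (H θ h (by linarith)).2]
      constructor <;> constructor
      · rintro ⟨_, _⟩; constructor <;> linarith
      · rintro ⟨_, _⟩; constructor <;> linarith
      · intro; right; linarith
      · intro; left; linarith
    · have := H (θ + 2 * Real.pi) (by linarith) (by linarith)
      rw [supp_periodic, supp_periodic] at this
      rw [this.1, this.2]
      simp only [sub_lt_iff_lt_add, lt_sub_iff_add_lt, and_self]

theorem triple_dir {A B C : Set Plane} (hA : ConvexBody2 A) (hB : ConvexBody2 B)
    (hC : ConvexBody2 C) (hAB : A ≠ B) (hAC : A ≠ C) (hP : ConvexPos {A, B, C}) :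
    ∃ φ : ℝ, 0 ≤ φ ∧ φ ≤ 2 * Real.pi ∧ supp B φ < supp A φ ∧ supp C φ < supp A φ := by
  have hdiff : ({A, B, C} : Set (Set Plane)) \ {A} = {B, C} := by
    ext X
    simp only [mem_sdiff, mem_insert_iff, mem_singleton_iff]
    constructor
    · tauto
    · rintro (rfl | rfl)
      · exact ⟨by tauto, hAB.symm⟩
      · exact ⟨by tauto, hAC.symm⟩
  have h := hP A (by simp)
  rw [hdiff] at h
  simp only [sUnion_insert, sUnion_singleton] at h
  have hn : ¬ A ⊆ convexHull ℝ (B ∪ C) := by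
    intro hs
    apply h
    apply subset_antisymm
    · apply convexHull_min _ (convex_convexHull ℝ _)
      exact union_subset hs (subset_convexHull ℝ _)
    · exact convexHull_mono subset_union_right
  obtain ⟨x, hxA, hx⟩ := not_subset.mp hn
  have hcl : IsClosed (convexHull ℝ (B ∪ C)) := by
    apply IsCompact.isClosed
    have : convexHull ℝ (B ∪ C) =
        (fun z : (Plane × Plane) × ℝ => (1 - z.2) • z.1.1 + z.2 • z.1.2) ''
          ((B ×ˢ C) ×ˢ Icc (0:ℝ) 1) := by
      rw [hB.2.2.convexHull_union hC.2.2 hB.1 hC.1]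
      ext y
      simp only [mem_convexJoin, segment_eq_image, mem_image, mem_prod, Prod.exists]
      constructor
      · rintro ⟨b, hb, c, hc, t, ht, rfl⟩
        exact ⟨b, c, t, ⟨⟨hb, hc⟩, ht⟩, rfl⟩
      · rintro ⟨b, c, t, ⟨⟨hb, hc⟩, ht⟩, rfl⟩
        exact ⟨b, hb, c, hc, t, ht, rfl⟩
    rw [this]
    exact ((hB.2.1.prod hC.2.1).prod isCompact_Icc).image (by fun_prop)
  obtain ⟨f, u, hf1, hf2⟩ := geometric_hahn_banach_closed_point (convex_convexHull ℝ _) hcl hx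
  obtain ⟨r, hr, φ, h0, h2π, hf⟩ := dual_rep f
  have key : ∀ D, ConvexBody2 D → D ⊆ B ∪ C → supp D φ < supp A φ := by
    intro D hD hDs
    obtain ⟨d, hd, hd', -⟩ := supp_spec hD φ
    have : f d < f x := (hf1 d (subset_convexHull ℝ _ (hDs hd))).trans hf2
    rw [hf, hf] at this
    rw [hd']
    exact (lt_of_mul_lt_mul_left this hr).trans_le (le_supp hA φ hxA)
  exact ⟨φ, h0, h2π, key B hB subset_union_left, key C hC subset_union_right⟩

theorem convexPos_of_dir {G : Set (Set Plane)} (hG : ∀ A ∈ G, ConvexBody2 A)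
    (h : ∀ A ∈ G, ∃ θ, ∀ B ∈ G, B ≠ A → supp B θ < supp A θ) : ConvexPos G := by
  intro A hA heq
  obtain ⟨θ, hθ⟩ := h A hA
  obtain ⟨a, ha, ha', -⟩ := supp_spec (hG A hA) θ
  have hmem : a ∈ convexHull ℝ (⋃₀ (G \ {A})) := by
    rw [← heq]
    exact subset_convexHull ℝ _ ⟨A, hA, ha⟩
  have hsub : convexHull ℝ (⋃₀ (G \ {A})) ⊆ {x | dirL θ x < supp A θ} := by
    apply convexHull_min
    · rintro x ⟨B, ⟨hB, hBA⟩, hx⟩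
      exact (le_supp (hG B hB) θ hx).trans_lt (hθ B hB hBA)
    · apply convex_halfSpace_lt
      constructor
      · intro x y; simp [dirL]; ring
      · intro c x; simp [dirL]; ring
  have := hsub hmem
  simp only [mem_ofPred_eq, ha', lt_self_iff_false] at this

/-- The combinatorial core: a monochromatic set of indices has every non-maximal
member exposed in some direction. -/
theorem exposed_of_mono {N : ℕ} (e : Fin N → Set Plane) (s t : Fin N → Fin N → ℝ)
    (hst : ∀ i j, i < j → 0 ≤ s i j ∧ s i j < t i j ∧ t i j ≤ 2 * Real.pi ∧
      ∀ θ, 0 < θ → θ < 2 * Real.pi →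
      (supp (e j) θ < supp (e i) θ ↔ s i j < θ ∧ θ < t i j) ∧
      (supp (e i) θ < supp (e j) θ ↔ θ < s i j ∨ t i j < θ))
    (hlow : ∀ i j k, i < j → i < k → s i j < t i k)
    (T : Finset (Fin N)) (i : Fin N) (hne : ∃ k ∈ T, i < k)
    (hT : (∀ j ∈ T, ∀ k ∈ T, j < i → i < k → t i k ≤ s j i ∨ t j i < t i k) ∨
      (∀ j ∈ T, ∀ k ∈ T, j < i → i < k → s i k < s j i)) :
    ∃ θ, ∀ j ∈ T, j ≠ i → supp (e j) θ < supp (e i) θ := by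
  classical
  have hK : (T.filter (fun k => i < k)).Nonempty := by
    obtain ⟨k, hk, hik⟩ := hne
    exact ⟨k, by simp [hk, hik]⟩
  obtain ⟨k₀, hk₀, hmax⟩ := Finset.exists_max_image _ (fun k => s i k) hK
  obtain ⟨k₁, hk₁, hmin⟩ := Finset.exists_min_image _ (fun k => t i k) hK
  simp only [Finset.mem_filter, and_imp] at hk₀ hk₁ hmax hmin
  have hLU : s i k₀ < t i k₁ := hlow i k₀ k₁ hk₀.2 hk₁.2
  have hL0 := (hst i k₀ hk₀.2).1
  have hU2 := (hst i k₁ hk₁.2).2.2.1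
  -- it is enough to find a suitable angle
  suffices h : ∃ θ, s i k₀ < θ ∧ θ < t i k₁ ∧ ∀ j ∈ T, j < i → θ < s j i ∨ t j i < θ by
    obtain ⟨θ, h1, h2, h3⟩ := h
    refine ⟨θ, fun j hj hji => ?_⟩
    rcases lt_or_gt_of_ne hji with h | h
    · exact ((hst j i h).2.2.2 θ (by linarith) (by linarith)).2.2 (h3 j hj h)
    · exact ((hst i j h).2.2.2 θ (by linarith) (by linarith)).1.2
        ⟨(hmax j hj h).trans_lt h1, h2.trans_le (hmin j hj h)⟩
  rcases hT with hT | hT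
  · have e1 : ∀ᶠ θ in nhdsWithin (t i k₁) (Iio (t i k₁)), s i k₀ < θ ∧ θ < t i k₁ :=
      Ioo_mem_nhdsLT hLU
    have e2 : ∀ᶠ θ in nhdsWithin (t i k₁) (Iio (t i k₁)), ∀ j ∈ T, j < i →
        θ < s j i ∨ t j i < θ := by
      rw [Filter.eventually_all_finset]
      intro j hj
      by_cases hji : j < i
      · rcases hT j hj k₁ hk₁.1 hji hk₁.2 with h | h
        · filter_upwards [e1] with θ hθ _
          exact Or.inl (hθ.2.trans_le h)
        · filter_upwards [Ioo_mem_nhdsLT h] with θ hθ _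
          exact Or.inr hθ.1
      · exact Filter.Eventually.of_forall (fun θ h => absurd h hji)
    obtain ⟨θ, h1, h2⟩ := (e1.and e2).exists
    exact ⟨θ, h1.1, h1.2, h2⟩
  · have e1 : ∀ᶠ θ in nhdsWithin (s i k₀) (Ioi (s i k₀)), s i k₀ < θ ∧ θ < t i k₁ :=
      Ioo_mem_nhdsGT hLU
    have e2 : ∀ᶠ θ in nhdsWithin (s i k₀) (Ioi (s i k₀)), ∀ j ∈ T, j < i →
        θ < s j i ∨ t j i < θ := by
      rw [Filter.eventually_all_finset]
      intro j hj
      by_cases hji : j < i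
      · filter_upwards [Ioo_mem_nhdsGT (hT j hj k₀ hk₀.1 hji hk₀.2)] with θ hθ _
        exact Or.inl hθ.2
      · exact Filter.Eventually.of_forall (fun θ h => absurd h hji)
    obtain ⟨θ, h1, h2⟩ := (e1.and e2).exists
    exact ⟨θ, h1.1, h1.2, h2⟩

theorem exists_sorted_enum (F : Set (Set Plane)) (hF : F.Finite) :
    ∃ e : Fin F.ncard → Set Plane, Function.Injective e ∧ (∀ i, e i ∈ F) ∧
      ∀ i j, i ≤ j → supp (e i) 0 ≤ supp (e j) 0 := by
  have : Finite F := hF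
  have hc : Nat.card F = F.ncard := rfl
  let e0 : F ≃ Fin F.ncard := Finite.equivFinOfCardEq hc
  let f : Fin F.ncard → ℝ := fun i => supp (e0.symm i : Set Plane) 0
  refine ⟨fun i => (e0.symm (Tuple.sort f i) : Set Plane), ?_, fun i => (e0.symm _).2, ?_⟩
  · intro i j h
    exact (Tuple.sort f).injective (e0.symm.injective (Subtype.ext h))
  · intro i j hij
    exact Tuple.monotone_sort f hij

/-- Bisztriczky–Fejes Tóth: Erdős–Szekeres for disjoint convex bodies. -/
theorem erdos_szekeres_disjoint_bodies :
    ∀ n : ℕ, 3 ≤ n → ∃ M : ℕ, ∀ F : Set (Set Plane), F.Finite → M ≤ F.ncard →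
      (∀ A ∈ F, ConvexBody2 A) → F.Pairwise Disjoint → GenPos F →
      ∃ G ⊆ F, G.ncard = n ∧ ConvexPos G := by
  classical
  intro n _
  obtain ⟨M, hM⟩ := ramsey_aux 3 (n + 1) (n + 1)
  refine ⟨M, fun F hF hcard hbody hdisj hgen => ?_⟩
  obtain ⟨e, einj, eF, emono⟩ := exists_sorted_enum F hF
  have hb : ∀ i, ConvexBody2 (e i) := fun i => hbody _ (eF i)
  have hex : ∀ i j, ∃ st : ℝ × ℝ, i < j → 0 ≤ st.1 ∧ st.1 < st.2 ∧ st.2 ≤ 2 * Real.pi ∧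
      ∀ θ, 0 < θ → θ < 2 * Real.pi →
      (supp (e j) θ < supp (e i) θ ↔ st.1 < θ ∧ θ < st.2) ∧
      (supp (e i) θ < supp (e j) θ ↔ θ < st.1 ∨ st.2 < θ) := by
    intro i j
    by_cases hij : i < j
    · obtain ⟨s, t, h⟩ := arc2 (hb i) (hb j) (hdisj (eF i) (eF j) (fun h => hij.ne (einj h)))
        (emono i j hij.le)
      exact ⟨(s, t), fun _ => h⟩
    · exact ⟨0, fun h => absurd h hij⟩
  choose st hst using hex
  -- a direction exposing one of three bodies
  have htri : ∀ i j k, i ≠ j → i ≠ k → j ≠ k → (i < j ∨ i < k) →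
      ∃ φ : ℝ, 0 < φ ∧ φ < 2 * Real.pi ∧
      supp (e j) φ < supp (e i) φ ∧ supp (e k) φ < supp (e i) φ := by
    intro i j k hij hik hjk hlt
    have h3 : ({e i, e j, e k} : Set (Set Plane)).ncard = 3 :=
      Set.ncard_eq_three.mpr ⟨e i, e j, e k, einj.ne hij, einj.ne hik, einj.ne hjk, rfl⟩
    have hsub : ({e i, e j, e k} : Set (Set Plane)) ⊆ F := by
      rintro X (rfl | rfl | rfl) <;> exact eF _
    obtain ⟨φ, h0, h2, hj, hk⟩ := triple_dir (hb i) (hb j) (hb k) (einj.ne hij) (einj.ne hik)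
      (hgen _ hsub h3)
    have hn0 : ¬ (supp (e j) 0 < supp (e i) 0 ∧ supp (e k) 0 < supp (e i) 0) := by
      rintro ⟨h, h'⟩
      rcases hlt with hlt | hlt
      · linarith [emono _ _ hlt.le]
      · linarith [emono _ _ hlt.le]
    refine ⟨φ, lt_of_le_of_ne h0 ?_, lt_of_le_of_ne h2 ?_, hj, hk⟩
    · rintro rfl
      exact hn0 ⟨hj, hk⟩
    · intro h
      rw [h, ← zero_add (2 * Real.pi)] at hj hk
      simp only [supp_periodic] at hj hk
      exact hn0 ⟨hj, hk⟩
  have hlow : ∀ i j k, i < j → i < k → (st i j).1 < (st i k).2 := by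
    intro i j k hij hik
    by_cases hjk : j = k
    · subst hjk; exact (hst i j hij).2.1
    · obtain ⟨φ, h0, h2, hj, hk⟩ := htri i j k hij.ne hik.ne hjk (Or.inl hij)
      have a := (((hst i j hij).2.2.2 φ h0 h2).1.1 hj).1
      have b := (((hst i k hik).2.2.2 φ h0 h2).1.1 hk).2
      exact a.trans b
  let P : Fin F.ncard → Fin F.ncard → Fin F.ncard → Prop := fun j i k =>
    (st i k).2 ≤ (st j i).1 ∨ (st j i).2 < (st i k).2
  -- Ramsey
  have hram : ∃ T : Finset (Fin F.ncard), T.card = n + 1 ∧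
      ((∀ j ∈ T, ∀ i ∈ T, ∀ k ∈ T, j < i → i < k → P j i k) ∨
       (∀ j ∈ T, ∀ i ∈ T, ∀ k ∈ T, j < i → i < k → ¬ P j i k)) := by
    have htc : ∀ j i k : Fin F.ncard, j < i → i < k → ({j, i, k} : Finset _).card = 3 :=
      fun j i k hji hik => Finset.card_eq_three.mpr ⟨j, i, k, hji.ne, (hji.trans hik).ne, hik.ne, rfl⟩
    have hts : ∀ (T : Finset (Fin F.ncard)), ∀ j ∈ T, ∀ i ∈ T, ∀ k ∈ T, ({j, i, k} : Finset _) ⊆ T := by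
      intro T j hj i hi k hk x hx
      simp only [Finset.mem_insert, Finset.mem_singleton] at hx
      rcases hx with rfl | rfl | rfl <;> assumption
    rcases hM (Fin F.ncard)
      (fun U => ∀ j ∈ U, ∀ i ∈ U, ∀ k ∈ U, j < i → i < k → P j i k) Finset.univ
      (by simpa using hcard) with ⟨T, -, hTc, hT⟩ | ⟨T, -, hTc, hT⟩
    · refine ⟨T, hTc, Or.inl fun j hj i hi k hk hji hik => ?_⟩
      exact hT _ (hts T j hj i hi k hk) (htc j i k hji hik) j (by simp) i (by simp) k (by simp) hji hik
    · refine ⟨T, hTc, Or.inr fun j hj i hi k hk hji hik hP => ?_⟩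
      refine hT _ (hts T j hj i hi k hk) (htc j i k hji hik) ?_
      intro j' hj' i' hi' k' hk' h1 h2
      have : j' = j ∧ i' = i ∧ k' = k := by
        simp only [Finset.mem_insert, Finset.mem_singleton] at hj' hi' hk'
        rcases hj' with rfl | rfl | rfl <;> rcases hi' with rfl | rfl | rfl <;>
          rcases hk' with rfl | rfl | rfl <;>
          first
          | exact ⟨rfl, rfl, rfl⟩
          | (exfalso; simp only [Fin.lt_def] at *; omega)
      rw [this.1, this.2.1, this.2.2]
      exact hP
  obtain ⟨T, hTc, hT⟩ := hram
  have hTne : T.Nonempty := Finset.card_pos.mp (by omega)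
  let m := T.max' hTne
  have hm : m ∈ T := T.max'_mem hTne
  have hexp : ∀ i ∈ T.erase m, ∃ θ, ∀ j ∈ T, j ≠ i → supp (e j) θ < supp (e i) θ := by
    intro i hi
    rw [Finset.mem_erase] at hi
    have him : i < m := lt_of_le_of_ne (T.le_max' i hi.2) hi.1
    refine exposed_of_mono e (fun i j => (st i j).1) (fun i j => (st i j).2) hst hlow T i
      ⟨m, hm, him⟩ ?_
    rcases hT with hT | hT
    · left
      intro j hj k hk hji hik
      exact hT j hj i hi.2 k hk hji hik
    · right
      intro j hj k hk hji hik
      have h := hT j hj i hi.2 k hk hji hik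
      simp only [P, not_or, not_le, not_lt] at h
      obtain ⟨φ, h0, h2, h3, h4⟩ := htri i j k hji.ne' hik.ne (hji.trans hik).ne (Or.inr hik)
      have a := ((hst i k hik).2.2.2 φ h0 h2).1.1 h4
      have b := ((hst j i hji).2.2.2 φ h0 h2).2.1 h3
      rcases b with b | b
      · exact a.1.trans b
      · linarith [a.2]
  refine ⟨e '' (T.erase m : Finset _), ?_, ?_, ?_⟩
  · rintro _ ⟨i, -, rfl⟩
    exact eF i
  · rw [Set.ncard_image_of_injective _ einj, Set.ncard_coe_finset, Finset.card_erase_of_mem hm, hTc]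
    rfl
  · apply convexPos_of_dir
    · rintro _ ⟨i, -, rfl⟩
      exact hb i
    · rintro _ ⟨i, hi, rfl⟩
      obtain ⟨θ, hθ⟩ := hexp i hi
      refine ⟨θ, ?_⟩
      rintro _ ⟨j, hj, rfl⟩ hne
      exact hθ j (Finset.mem_of_mem_erase hj) (fun h => hne (h ▸ rfl))
end
end

section
/- Let F be a finite family of pairwise distinct, pairwise noncrossing nonempty compact convex subsets of ℝ² in general position (no two tangent, no line tangent to three members). If F is in convex position, then there exists an enumeration A₁, …, A_N of F such that for all indices i < j < k the ordered triple (A_i, A_j, A_k) is counterclockwise oriented. -/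
open Set

noncomputable section

lemma not_mem_hull_three {K : Set Plane} (hK : Convex ℝ K) {p q r s : Plane}
    (hp : p ∈ K.extremePoints ℝ) (hq : q ∈ K) (hr : r ∈ K) (hs : s ∈ K)
    (hqp : q ≠ p) (hrp : r ≠ p) (hsp : s ≠ p) (a b c : ℝ) (ha : 0 ≤ a) (hb : 0 ≤ b) (hc : 0 ≤ c)
    (hpos : 0 < a + b + c)
    (h0 : a * (q 0 - p 0) + b * (r 0 - p 0) + c * (s 0 - p 0) = 0)
    (h1 : a * (q 1 - p 1) + b * (r 1 - p 1) + c * (s 1 - p 1) = 0) : False := by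
  rw [hK.mem_extremePoints_iff_mem_diff_convexHull_diff] at hp
  apply hp.2
  have hconv := convex_convexHull ℝ (K \ {p})
  have mq : q ∈ convexHull ℝ (K \ {p}) := subset_convexHull ℝ _ ⟨hq, hqp⟩
  have mr : r ∈ convexHull ℝ (K \ {p}) := subset_convexHull ℝ _ ⟨hr, hrp⟩
  have ms : s ∈ convexHull ℝ (K \ {p}) := subset_convexHull ℝ _ ⟨hs, hsp⟩
  have key := hconv.sum_mem (t := Finset.univ) (w := ![a/(a+b+c), b/(a+b+c), c/(a+b+c)])
    (z := ![q, r, s])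
    (by intro i _; fin_cases i <;> simp <;> positivity)
    (by simp [Fin.sum_univ_three]; field_simp)
    (by intro i _; fin_cases i <;> simp [mq, mr, ms])
  convert key using 1
  ext i
  fin_cases i <;> simp [Fin.sum_univ_three] <;> field_simp <;> linarith

lemma det2_ne_zero_of_extreme {K : Set Plane} (hK : Convex ℝ K) {p q r : Plane}
    (hp : p ∈ K.extremePoints ℝ) (hq : q ∈ K.extremePoints ℝ) (hr : r ∈ K.extremePoints ℝ)
    (hqp : q ≠ p) (hrp : r ≠ p) (hqr : q ≠ r) : det2 (q - p) (r - p) ≠ 0 := by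
  intro h
  simp only [det2, PiLp.sub_apply] at h
  -- u = q - p, v = r - p parallel; use the inner products
  set D := (q 0 - p 0) * (r 0 - p 0) + (q 1 - p 1) * (r 1 - p 1) with hD
  set U := (q 0 - p 0) ^ 2 + (q 1 - p 1) ^ 2 with hU
  set V := (r 0 - p 0) ^ 2 + (r 1 - p 1) ^ 2 with hV
  have pos : ∀ x y : Plane, x ≠ y → 0 < (x 0 - y 0) ^ 2 + (x 1 - y 1) ^ 2 := by
    intro x y hxy
    by_contra hc
    apply hxy
    have e0 : x 0 - y 0 = 0 := by nlinarith [sq_nonneg (x 0 - y 0), sq_nonneg (x 1 - y 1)]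
    have e1 : x 1 - y 1 = 0 := by nlinarith [sq_nonneg (x 0 - y 0), sq_nonneg (x 1 - y 1)]
    ext i
    fin_cases i <;> simp <;> linarith
  have hU0 : 0 < U := pos q p hqp
  have hV0 : 0 < V := pos r p hrp
  -- D * u = U * v, and V * u = D * v
  have a0 : D * (q 0 - p 0) = U * (r 0 - p 0) := by
    rw [hD, hU]; linear_combination (q 1 - p 1) * h
  have a1 : D * (q 1 - p 1) = U * (r 1 - p 1) := by
    rw [hD, hU]; linear_combination -(q 0 - p 0) * h
  rcases le_or_gt D 0 with hDn | hDp
  · exact not_mem_hull_three hK hp hq.1 hr.1 hr.1 hqp hrp hrp (-D) U 0 (by linarith) hU0.le le_rfl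
      (by linarith) (by linarith) (by linarith)
  rcases le_or_gt D U with hle | hgt
  · -- r between p and q: U (r - p) = D (q - p)
    exact not_mem_hull_three hK hr hq.1 hp.1 hp.1 hqr hrp.symm hrp.symm D (U - D) 0 hDp.le
      (by linarith) le_rfl (by linarith) (by linarith) (by linarith)
  · exact not_mem_hull_three hK hq hr.1 hp.1 hp.1 hqr.symm hqp.symm hqp.symm U (D - U) 0 hU0.le
      (by linarith) le_rfl (by linarith) (by linarith) (by linarith)

lemma exists_ccw_points {α : Type} [Fintype α] {n : ℕ} (hn : Fintype.card α = n)
    {K : Set Plane} (hK : Convex ℝ K) (p : α → Plane) (hinj : Function.Injective p)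
    (hp : ∀ a, p a ∈ K.extremePoints ℝ) :
    ∃ e : Fin n ≃ α, ∀ i j k, i < j → j < k →
      0 < det2 (p (e j) - p (e i)) (p (e k) - p (e i)) := by
  classical
  rcases isEmpty_or_nonempty α with hα | ⟨⟨o⟩⟩
  · exact ⟨(Fintype.equivFinOfCardEq hn).symm, fun i => (hα.false
      ((Fintype.equivFinOfCardEq hn).symm i)).elim⟩
  have hne : ∀ a b, a ≠ b → p a ≠ p b := fun a b h => hinj.ne h
  have htrans : ∀ a b c, a ≠ o → b ≠ o → c ≠ o → 0 < det2 (p a - p o) (p b - p o) →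
      0 < det2 (p b - p o) (p c - p o) → 0 < det2 (p a - p o) (p c - p o) := by
    intro a b c ha hb hc h1 h2
    by_contra h3
    simp only [det2, PiLp.sub_apply] at h1 h2 h3
    refine not_mem_hull_three hK (hp o) (hp a).1 (hp b).1 (hp c).1 (hne _ _ ha) (hne _ _ hb)
      (hne _ _ hc) _ _ _ h2.le (neg_nonneg.2 (not_lt.1 h3)) h1.le (by linarith) ?_ ?_ <;> ring
  let lt : α → α → Prop := fun a b =>
    (a = o ∧ b ≠ o) ∨ (a ≠ o ∧ b ≠ o ∧ 0 < det2 (p a - p o) (p b - p o))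
  haveI : IsStrictTotalOrder α lt :=
    { irrefl := by
        rintro a (h | ⟨_, _, h⟩)
        · exact h.2 h.1
        · simp only [det2] at h; linarith
      trans := by
        rintro a b c (⟨h1, h2⟩ | ⟨h1, h2, h3⟩) (⟨h4, h5⟩ | ⟨h4, h5, h6⟩)
        · exact Or.inl ⟨h1, h5⟩
        · exact Or.inl ⟨h1, h5⟩
        · exact absurd h4 h2
        · exact Or.inr ⟨h1, h5, htrans a b c h1 h2 h5 h3 h6⟩
      trichotomous := by
        intro a b h1 h2
        by_contra hab
        by_cases ha : a = o
        · exact h1 (Or.inl ⟨ha, fun hb => hab (ha.trans hb.symm)⟩)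
        by_cases hb : b = o
        · exact h2 (Or.inl ⟨hb, ha⟩)
        have := det2_ne_zero_of_extreme hK (hp o) (hp a) (hp b) (hne _ _ ha) (hne _ _ hb)
          (hne _ _ hab)
        rcases lt_or_gt_of_ne this with h | h
        · apply h2
          refine Or.inr ⟨hb, ha, ?_⟩
          simp only [det2] at h ⊢
          linarith
        · exact h1 (Or.inr ⟨ha, hb, h⟩) }
  letI : LinearOrder α := linearOrderOfSTO lt
  let e := (Fintype.orderIsoFinOfCardEq α hn)
  refine ⟨e.toEquiv, ?_⟩
  intro i j k hij hjk
  have h1 : lt (e i) (e j) := e.strictMono hij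
  have h2 : lt (e j) (e k) := e.strictMono hjk
  change 0 < det2 (p (e j) - p (e i)) (p (e k) - p (e i))
  generalize e i = a at *
  generalize e j = b at *
  generalize e k = c at *
  rcases h2 with ⟨h2, _⟩ | ⟨hb, hc, h2⟩
  · rcases h1 with ⟨_, h1⟩ | ⟨_, h1, _⟩ <;> exact absurd h2 h1
  rcases h1 with ⟨rfl, _⟩ | ⟨ha, _, h1⟩
  · exact h2
  have h3 := htrans a b c ha hb hc h1 h2
  by_contra h4
  have hab : a ≠ b := by
    rintro rfl
    simp only [det2] at h1; linarith
  have hcb : c ≠ b := by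
    rintro rfl
    simp only [det2] at h2; linarith
  simp only [det2, PiLp.sub_apply] at h1 h2 h3 h4
  refine not_mem_hull_three hK (hp b) (hp a).1 (hp c).1 (hp o).1 (hne _ _ hab) (hne _ _ hcb)
    (hne _ _ hb.symm) _ _ _ h2.le h1.le (neg_nonneg.2 (not_lt.1 h4)) (by linarith) ?_ ?_ <;> ring

lemma extreme_mem_frontier {K L : Set Plane} (hLK : L ⊆ K) {x : Plane}
    (hx : x ∈ K.extremePoints ℝ) (hxL : x ∈ L) : x ∈ frontier L := by
  refine ⟨subset_closure hxL, fun hi => ?_⟩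
  obtain ⟨ε, hε, hb⟩ := Metric.mem_nhds_iff.1 (mem_interior_iff_mem_nhds.1 hi)
  let v : Plane := EuclideanSpace.single 0 (ε / 2)
  have hv : ‖v‖ < ε := by
    simp only [v, EuclideanSpace.norm_single, Real.norm_eq_abs]
    rw [abs_of_pos (by linarith)]; linarith
  have hv0 : v ≠ 0 := by
    intro h
    have := congrArg (fun w : Plane => w 0) h
    simp [v] at this
    linarith
  have m1 : x + v ∈ K := hLK (hb (by simpa [Metric.mem_ball, dist_eq_norm] using hv))
  have m2 : x - v ∈ K := hLK (hb (by simpa [Metric.mem_ball, dist_eq_norm] using hv))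
  have := hx.2 m1 m2 ⟨1/2, 1/2, by norm_num, by norm_num, by norm_num, by module⟩
  exact hv0 (by simpa using this)

lemma isCompact_hull_sUnion {F : Set (Set Plane)} (hfin : F.Finite)
    (hbody : ∀ A ∈ F, ConvexBody2 A) : IsCompact (convexHull ℝ (⋃₀ F)) := by
  induction F, hfin using Set.Finite.induction_on with
  | empty => simp
  | @insert A S hA hS ih =>
    have hSb : ∀ B ∈ S, ConvexBody2 B := fun B hB => hbody B (Or.inr hB)
    have ihS := ih hSb
    obtain ⟨hne, hc, hcv⟩ := hbody A (Or.inl rfl)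
    rw [sUnion_insert]
    rcases (⋃₀ S).eq_empty_or_nonempty with h0 | h0
    · rw [h0, union_empty, hcv.convexHull_eq]
      exact hc
    rw [convexHull_union hne h0, hcv.convexHull_eq]
    have himg : convexJoin ℝ A (convexHull ℝ (⋃₀ S)) =
        (fun z : ℝ × Plane × Plane => (1 - z.1) • z.2.1 + z.1 • z.2.2) ''
          (Icc (0 : ℝ) 1 ×ˢ A ×ˢ convexHull ℝ (⋃₀ S)) := by
      ext x
      simp only [mem_convexJoin, segment_eq_image, mem_image, Prod.exists, mem_prod]
      constructor
      · rintro ⟨a, ha, b, hb, t, ht, rfl⟩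
        exact ⟨t, a, b, ⟨ht, ha, hb⟩, rfl⟩
      · rintro ⟨t, a, b, ⟨ht, ha, hb⟩, rfl⟩
        exact ⟨a, ha, b, hb, t, ht, rfl⟩
    rw [himg]
    exact (isCompact_Icc.prod (hc.prod ihS)).image (by fun_prop)

/-- A family in convex position admits an enumeration in which every ordered
triple is counterclockwise oriented. -/
theorem exists_ccw_enumeration_of_convexPos (F : Set (Set Plane)) (hfin : F.Finite)
    (hbody : ∀ A ∈ F, ConvexBody2 A)
    (hnc : F.Pairwise NoncrossingPair)
    (hgen : GenPos F)
    (htan : F.Pairwise fun A B => ¬ TangentBodies A B)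
    (hline : NoTripleTangentLine F)
    (hconv : ConvexPos F) :
    ∃ A : Fin F.ncard → Set Plane, Function.Injective A ∧ Set.range A = F ∧
      ∀ i j k : Fin F.ncard, i < j → j < k → CCWOriented (A i) (A j) (A k) := by
  classical
  set K := convexHull ℝ (⋃₀ F) with hKdef
  have hKc : IsCompact K := isCompact_hull_sUnion hfin hbody
  have hK : Convex ℝ K := convex_convexHull ℝ _
  have hex : ∀ A : F, ∃ x ∈ K.extremePoints ℝ, x ∈ A.1 ∧ ∀ B ∈ F, B ≠ A.1 → x ∉ B := by
    rintro ⟨A, hA⟩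
    by_contra hcon
    push Not at hcon
    apply hconv A hA
    apply Subset.antisymm _ (convexHull_mono (sUnion_subset_sUnion diff_subset))
    have hsub : K.extremePoints ℝ ⊆ ⋃₀ (F \ {A}) := by
      intro x hx
      obtain ⟨B, hB, hxB⟩ := extremePoints_convexHull_subset hx
      by_cases hBA : B = A
      · subst hBA
        obtain ⟨C, hC, hCB, hxC⟩ := hcon x hx hxB
        exact ⟨C, ⟨hC, hCB⟩, hxC⟩
      · exact ⟨B, ⟨hB, hBA⟩, hxB⟩
    have hcl : IsClosed (convexHull ℝ (⋃₀ (F \ {A}))) :=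
      (isCompact_hull_sUnion (hfin.subset diff_subset) fun B hB => hbody B hB.1).isClosed
    change K ⊆ _
    rw [← closure_convexHull_extremePoints hKc hK]
    exact closure_minimal (convexHull_mono hsub) hcl
  choose p hp hpA hpB using hex
  haveI : Fintype F := hfin.fintype
  have hinj : Function.Injective p := by
    intro A B h
    by_contra hAB
    exact hpB A B.1 B.2 (fun h' => hAB (Subtype.ext h'.symm)) (h ▸ hpA B)
  have hcard : Fintype.card F = F.ncard := by
    rw [← Nat.card_coe_set_eq, Nat.card_eq_fintype_card]
  obtain ⟨e, he⟩ := exists_ccw_points hcard hK p hinj hp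
  refine ⟨fun i => (e i).1, fun i j h => e.injective (Subtype.ext h), ?_, ?_⟩
  · ext A
    constructor
    · rintro ⟨i, rfl⟩
      exact (e i).2
    · intro hA
      exact ⟨e.symm ⟨A, hA⟩, by simp⟩
  · intro i j k hij hjk
    have hLK : convexHull ℝ ((e i).1 ∪ (e j).1 ∪ (e k).1) ⊆ K :=
      convexHull_mono (union_subset (union_subset (subset_sUnion_of_mem (e i).2)
        (subset_sUnion_of_mem (e j).2)) (subset_sUnion_of_mem (e k).2))
    refine ⟨p (e i), ⟨hpA _, extreme_mem_frontier hLK (hp _) (subset_convexHull ℝ _ ?_)⟩,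
      p (e j), ⟨hpA _, extreme_mem_frontier hLK (hp _) (subset_convexHull ℝ _ ?_)⟩,
      p (e k), ⟨hpA _, extreme_mem_frontier hLK (hp _) (subset_convexHull ℝ _ ?_)⟩,
      he i j k hij hjk⟩
    · exact Or.inl (Or.inl (hpA _))
    · exact Or.inl (Or.inr (hpA _))
    · exact Or.inr (hpA _)
end
end

section
/- For every d ≥ 2 and every pair of natural numbers t, n ≥ 3 there exists a natural number h such that every finite family of more than h pairwise distinct nonempty compact convex subsets of ℝ^d contains either a subfamily of t members that admit a common transversal hyperplane, or a subfamily of n members in convex position. -/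
open Set

noncomputable section

theorem ramsey_lists (r : ℕ) : ∀ m : ℕ, ∃ N : ℕ, ∀ S : Finset ℕ, N ≤ S.card →
    ∀ c : List ℕ → Fin 3, ∃ T ⊆ S, T.card = m ∧ ∃ k : Fin 3, ∀ l : List ℕ,
      l.Pairwise (· < ·) → (∀ x ∈ l, x ∈ T) → l.length = r → c l = k := by
  induction r with
  | zero =>
    intro m
    refine ⟨m, fun S hS c => ?_⟩
    obtain ⟨T, hT, hc⟩ := Finset.exists_subset_card_eq hS
    refine ⟨T, hT, hc, c [], fun l _ _ h => ?_⟩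
    rw [List.length_eq_zero_iff.mp h]
  | succ r ih =>
    have key : ∀ m : ℕ, ∃ N : ℕ, ∀ S : Finset ℕ, N ≤ S.card →
        ∀ c : List ℕ → Fin 3, ∃ T ⊆ S, T.card = m ∧ ∃ k : ℕ → Fin 3, ∀ (v : ℕ) (l : List ℕ),
          (v :: l).Pairwise (· < ·) → (∀ x ∈ v :: l, x ∈ T) → l.length = r →
            c (v :: l) = k v := by
      intro m
      induction m with
      | zero =>
        refine ⟨0, fun S _ c => ⟨∅, by simp, by simp, fun _ => 0, fun v l _ h => ?_⟩⟩
        simpa using h v (by simp)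
      | succ m ihm =>
        obtain ⟨N, hN⟩ := ihm
        obtain ⟨N', hN'⟩ := ih N
        refine ⟨N' + 1, fun S hS c => ?_⟩
        have hne : S.Nonempty := Finset.card_pos.mp (by omega)
        set v := S.min' hne with hv
        have hvS : v ∈ S := S.min'_mem hne
        obtain ⟨S', hS', hc', k0, hk0⟩ := hN' (S.erase v)
          (by rw [Finset.card_erase_of_mem hvS]; omega) (fun l => c (v :: l))
        obtain ⟨T, hT, hTc, k, hk⟩ := hN S' hc'.ge c
        have hlt : ∀ x ∈ T, v < x := fun x hx => by
          have := hS' (hT hx)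
          rw [Finset.mem_erase] at this
          exact lt_of_le_of_ne (S.min'_le x this.2) (Ne.symm this.1)
        have hvT : v ∉ T := fun h => lt_irrefl _ (hlt v h)
        refine ⟨insert v T, ?_, ?_, fun w => if w = v then k0 else k w, ?_⟩
        · intro x hx
          rcases Finset.mem_insert.mp hx with rfl | hx
          · exact hvS
          · exact Finset.mem_of_mem_erase (hS' (hT hx))
        · rw [Finset.card_insert_of_notMem hvT, hTc]
        · intro w l hp hm hl
          have hw := hm w (by simp)
          rw [List.pairwise_cons] at hp
          have hlT : ∀ x ∈ l, x ∈ T := fun x hx => by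
            have h1 := hp.1 x hx
            rcases Finset.mem_insert.mp (hm x (by simp [hx])) with rfl | h
            · rcases Finset.mem_insert.mp hw with h2 | h2
              · omega
              · have := hlt w h2; omega
            · exact h
          by_cases hwv : w = v
          · simp only [hwv, if_true]
            exact hk0 l hp.2 (fun x hx => hT (hlT x hx)) hl
          · simp only [hwv, if_false]
            have hwT : w ∈ T := (Finset.mem_insert.mp hw).resolve_left hwv
            refine hk w l (List.pairwise_cons.mpr hp) (fun x hx => ?_) hl
            rcases List.mem_cons.mp hx with rfl | hx
            · exact hwT
            · exact hlT x hx
    intro m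
    obtain ⟨N, hN⟩ := key (3 * m)
    refine ⟨N, fun S hS c => ?_⟩
    obtain ⟨T, hT, hTc, k, hk⟩ := hN S hS c
    obtain ⟨y, -, hy⟩ := Finset.exists_le_card_fiber_of_mul_le_card_of_maps_to
      (s := T) (t := (Finset.univ : Finset (Fin 3))) (f := k) (n := m) (by simp) (by simp)
      (by simp [hTc])
    obtain ⟨T', hT', hc'⟩ := Finset.exists_subset_card_eq hy
    refine ⟨T', fun x hx => hT (Finset.mem_of_mem_filter _ (hT' hx)), hc', y, ?_⟩
    intro l hp hm hl
    cases l with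
    | nil => simp at hl
    | cons v l =>
      rw [hk v l hp (fun x hx => Finset.mem_of_mem_filter _ (hT' (hm x hx))) (by simpa using hl)]
      exact (Finset.mem_filter.mp (hT' (hm v (by simp)))).2

/-- `g` decreases with rate between `m` and `M`. -/
def Slp (g : ℝ → ℝ) (m M : ℝ) : Prop :=
  ∀ s s' : ℝ, s ≤ s' → g s - (s' - s) * M ≤ g s' ∧ g s' ≤ g s - (s' - s) * m

theorem Slp.continuous {g : ℝ → ℝ} {m M : ℝ} (h : Slp g m M) : Continuous g := by
  have : LipschitzWith (Real.toNNReal (|m| + |M|)) g := by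
    apply LipschitzWith.of_le_add_mul
    intro x y
    rw [Real.coe_toNNReal _ (by positivity), Real.dist_eq]
    have hm := neg_abs_le m
    have hm' := le_abs_self m
    have hM := neg_abs_le M
    have hM' := le_abs_self M
    have hm0 := abs_nonneg m
    have hM0 := abs_nonneg M
    rcases le_total x y with hxy | hxy
    · have := (h x y hxy).1
      rw [abs_of_nonpos (show x - y ≤ 0 by linarith)]
      nlinarith
    · have := (h y x hxy).2
      rw [abs_of_nonneg (show 0 ≤ x - y by linarith)]
      nlinarith
  exact this.continuous

theorem Slp.neg {g : ℝ → ℝ} {m M : ℝ} (h : Slp g m M) : Slp (fun s => - g (-s)) m M := by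
  intro s s' hs
  have := h (-s') (-s) (by linarith)
  constructor <;> linarith [this.1, this.2]

theorem Slp.root {g h : ℝ → ℝ} {m M m' M' : ℝ} (hg : Slp g m M) (hh : Slp h m' M')
    (hM : M < m') : ∃ U : ℝ, ∀ s, (s < U → g s < h s) ∧ (U < s → h s < g s) ∧ g U = h U := by
  have hc : Continuous (fun s => g s - h s) := hg.continuous.sub hh.continuous
  have hr : ∀ s s', s ≤ s' → g s - h s + (s' - s) * (m' - M) ≤ g s' - h s' := fun s s' hs => by
    have h1 := (hg s s' hs).1
    have h2 := (hh s s' hs).2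
    linarith
  have hd : 0 < m' - M := by linarith
  set B := |g 0 - h 0| / (m' - M) with hB
  have hB0 : 0 ≤ B := by positivity
  have hBm : B * (m' - M) = |g 0 - h 0| := by rw [hB]; field_simp
  have h1 := hr (-B) 0 (by linarith)
  have h2 := hr 0 B hB0
  have h3 := le_abs_self (g 0 - h 0)
  have h4 := neg_abs_le (g 0 - h 0)
  obtain ⟨U, -, hU⟩ := intermediate_value_Icc (show -B ≤ B by linarith) hc.continuousOn
    (show (0 : ℝ) ∈ Set.Icc _ _ from ⟨by linarith, by linarith⟩)
  simp only at hU
  refine ⟨U, fun s => ⟨fun hs => ?_, fun hs => ?_, by linarith⟩⟩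
  · have := hr s U hs.le
    have : 0 < (U - s) * (m' - M) := mul_pos (by linarith) hd
    linarith
  · have := hr U s hs.le
    have : 0 < (s - U) * (m' - M) := mul_pos (by linarith) hd
    linarith

theorem cap_lemma (T : Finset ℕ) (u : ℕ → ℝ → ℝ) (m M : ℕ → ℝ)
    (hu : ∀ i, Slp (u i) (m i) (M i))
    (hM : ∀ i ∈ T, ∀ j ∈ T, i < j → M i < m j)
    (hcap : ∀ i ∈ T, ∀ j ∈ T, ∀ k ∈ T, i < j → j < k → ∃ s, u i s < u j s ∧ u k s < u j s) :
    ∀ j ∈ T, ∃ s, ∀ i ∈ T, i ≠ j → u i s < u j s := by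
  intro j hj
  have : ∀ i k, ∃ U : ℝ, i ∈ T → k ∈ T → i < k → 
      ∀ s, (s < U → u i s < u k s) ∧ (U < s → u k s < u i s) ∧ u i U = u k U := by
    intro i k
    by_cases h : i ∈ T ∧ k ∈ T ∧ i < k
    · obtain ⟨U, hU⟩ := (hu i).root (hu k) (hM i h.1 k h.2.1 h.2.2)
      exact ⟨U, fun _ _ _ => hU⟩
    · exact ⟨0, fun a b c => absurd ⟨a, b, c⟩ h⟩
  choose U hU using this
  obtain ⟨s, hs1, hs2⟩ := Finset.exists_between' ((T.filter (j < ·)).image (U j))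
    ((T.filter (· < j)).image (fun i => U i j)) (by
      intro x hx y hy
      simp only [Finset.mem_image, Finset.mem_filter] at hx hy
      obtain ⟨k, ⟨hk, hjk⟩, rfl⟩ := hx
      obtain ⟨i, ⟨hi, hij⟩, rfl⟩ := hy
      obtain ⟨s, h1, h2⟩ := hcap i hi j hj k hk hij hjk
      have a := hU i j hi hj hij
      have b := hU j k hj hk hjk
      have hs1 : s < U i j := by
        rcases lt_trichotomy s (U i j) with h | h | h
        · exact h
        · subst h; linarith [(a 0).2.2]
        · linarith [(a s).2.1 h]
      have hs2 : U j k < s := by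
        rcases lt_trichotomy s (U j k) with h | h | h
        · linarith [(b s).1 h]
        · subst h; linarith [(b 0).2.2]
        · exact h
      linarith)
  refine ⟨s, fun i hi hij => ?_⟩
  rcases lt_or_gt_of_ne hij with h | h
  · exact (hU i j hi hj h s).1 (hs2 _ (Finset.mem_image.mpr ⟨i, by simp [hi, h], rfl⟩))
  · exact (hU j i hj hi h s).2.1 (hs1 _ (Finset.mem_image.mpr ⟨i, by simp [hi, h], rfl⟩))

theorem comb_aux (T : Finset ℕ) (u l : ℕ → ℝ) (hlu : ∀ i, l i ≤ u i)
    (hu : ∀ i ∈ T, ∀ j ∈ T, ∀ k ∈ T, i < j → j < k → u j ≤ u i ∨ u j ≤ u k)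
    (hl : ∀ i ∈ T, ∀ j ∈ T, ∀ k ∈ T, i < j → j < k → l i ≤ l j ∨ l k ≤ l j)
    (i0 j0 : ℕ) (hi0 : i0 ∈ T) (hj0 : j0 ∈ T) (h0 : i0 < j0) (hmax : ∀ i ∈ T, l i ≤ l i0)
    (hmin : ∀ i ∈ T, u j0 ≤ u i) (hlt : u j0 < l i0) :
    ∀ i ∈ T, ∀ j ∈ T, i < j → l j ≤ u i := by
  intro i hi j hj hij
  by_contra hcon
  push Not at hcon
  have e1 := hmax i hi
  have e2 := hmax j hj
  have e3 := hmin i hi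
  have e4 := hmin j hj
  have a1 := hlu i
  have a2 := hlu j
  have a3 := hlu i0
  have a4 := hlu j0
  -- `i0 < i`
  have h1 : i0 < i := by
    rcases lt_trichotomy i i0 with h | h | h
    · rcases hu i hi i0 hi0 j0 hj0 h h0 with h' | h' <;> linarith
    · subst h; linarith
    · exact h
  have h2 : j < j0 := by
    rcases lt_trichotomy j j0 with h | h | h
    · exact h
    · subst h; linarith
    · rcases hl i0 hi0 j0 hj0 j hj h0 h with h' | h' <;> linarith
  rcases hl i0 hi0 i hi j hj h1 hij with h' | h' <;> linarith

theorem comb (T : Finset ℕ) (u l : ℕ → ℝ) (hlu : ∀ i, l i ≤ u i)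
    (hu : ∀ i ∈ T, ∀ j ∈ T, ∀ k ∈ T, i < j → j < k → u j ≤ u i ∨ u j ≤ u k)
    (hl : ∀ i ∈ T, ∀ j ∈ T, ∀ k ∈ T, i < j → j < k → l i ≤ l j ∨ l k ≤ l j) :
    (∀ i ∈ T, ∀ j ∈ T, i < j → l j ≤ u i) ∨ (∀ i ∈ T, ∀ j ∈ T, i < j → l i ≤ u j) := by
  rcases T.eq_empty_or_nonempty with rfl | hT
  · simp
  obtain ⟨i0, hi0, hmax⟩ := T.exists_max_image l hT
  obtain ⟨j0, hj0, hmin⟩ := T.exists_min_image u hT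
  by_cases hlt : u j0 < l i0
  · rcases lt_trichotomy i0 j0 with h | h | h
    · left
      exact comb_aux T u l hlu hu hl i0 j0 hi0 hj0 h hmax hmin hlt
    · subst h; linarith [hlu i0]
    · right
      have := comb_aux T (fun i => - l i) (fun i => - u i) (fun i => by simpa using hlu i)
        (fun i hi j hj k hk a b => by simpa using hl i hi j hj k hk a b)
        (fun i hi j hj k hk a b => by simpa using hu i hi j hj k hk a b)
        j0 i0 hj0 hi0 h (fun i hi => by simpa using hmin i hi)
        (fun i hi => by simpa using hmax i hi) (by simpa using hlt)
      intro i hi j hj hij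
      simpa using this i hi j hj hij
  · left
    intro i hi j hj _
    linarith [hmax j hj, hmin i hi]

theorem transversal_lemma (T : Finset ℕ) (hT : 2 ≤ T.card) (u l : ℕ → ℝ → ℝ) (m M : ℕ → ℝ)
    (hus : ∀ i, Slp (u i) (m i) (M i)) (hls : ∀ i, Slp (l i) (m i) (M i))
    (hM : ∀ i ∈ T, ∀ j ∈ T, i < j → M i < m j) (hlu : ∀ i s, l i s ≤ u i s)
    (hu : ∀ i ∈ T, ∀ j ∈ T, ∀ k ∈ T, i < j → j < k → ∀ s, u j s ≤ u i s ∨ u j s ≤ u k s)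
    (hl : ∀ i ∈ T, ∀ j ∈ T, ∀ k ∈ T, i < j → j < k → ∀ s, l i s ≤ l j s ∨ l k s ≤ l j s) :
    ∃ s c, ∀ i ∈ T, l i s ≤ c ∧ c ≤ u i s := by
  obtain ⟨p, hp, q, hq, hpq⟩ : ∃ p ∈ T, ∃ q ∈ T, p < q := by
    obtain ⟨p, hp, q, hq, hpq⟩ := Finset.one_lt_card.mp (show 1 < T.card by omega)
    rcases lt_or_gt_of_ne hpq with h | h
    · exact ⟨p, hp, q, hq, h⟩
    · exact ⟨q, hq, p, hp, h⟩
  let B : Set ℝ := {x | ∃ i ∈ T, ∃ j ∈ T, i < j ∧ ∀ s,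
    (s < x → u i s < l j s) ∧ (x < s → l j s < u i s) ∧ u i x = l j x}
  let A : Set ℝ := {x | ∃ i ∈ T, ∃ j ∈ T, i < j ∧ ∀ s,
    (s < x → l i s < u j s) ∧ (x < s → u j s < l i s) ∧ l i x = u j x}
  have hB : B.Nonempty := by
    obtain ⟨x, hx⟩ := (hus p).root (hls q) (hM p hp q hq hpq)
    exact ⟨x, p, hp, q, hq, hpq, hx⟩
  have hA : A.Nonempty := by
    obtain ⟨x, hx⟩ := (hls p).root (hus q) (hM p hp q hq hpq)
    exact ⟨x, p, hp, q, hq, hpq, hx⟩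
  have hBA : ∀ b ∈ B, ∀ a ∈ A, b ≤ a := by
    rintro b ⟨i, hi, j, hj, hij, hb⟩ a ⟨k, hk, n, hn, hkn, ha⟩
    by_contra hcon
    push Not at hcon
    obtain ⟨s, hs1, hs2⟩ := exists_between hcon
    have e1 := (hb s).1 hs2
    have e2 := (ha s).2.1 hs1
    rcases comb T (fun i => u i s) (fun i => l i s) (fun i => hlu i s)
      (fun i hi j hj k hk a b => hu i hi j hj k hk a b s)
      (fun i hi j hj k hk a b => hl i hi j hj k hk a b s) with h | h
    · linarith [h i hi j hj hij]
    · linarith [h k hk n hn hkn]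
  obtain ⟨s, hs1, hs2⟩ := exists_between_of_forall_le hB hA hBA
  have hle : ∀ i ∈ T, ∀ j ∈ T, l i s ≤ u j s := by
    intro i hi j hj
    rcases lt_trichotomy i j with h | h | h
    · obtain ⟨x, hx⟩ := (hls i).root (hus j) (hM i hi j hj h)
      have : s ≤ x := hs2 ⟨i, hi, j, hj, h, hx⟩
      rcases this.lt_or_eq with h' | h'
      · exact ((hx s).1 h').le
      · rw [h']; exact (hx s).2.2.le
    · subst h; exact hlu i s
    · obtain ⟨x, hx⟩ := (hus j).root (hls i) (hM j hj i hi h)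
      have : x ≤ s := hs1 ⟨j, hj, i, hi, h, hx⟩
      rcases this.lt_or_eq with h' | h'
      · exact ((hx s).2.1 h').le
      · rw [← h']; exact (hx s).2.2.ge
  obtain ⟨c, hc1, hc2⟩ := exists_between_of_forall_le
    (s := {x | ∃ i ∈ T, l i s = x}) (t := {x | ∃ i ∈ T, u i s = x}) ⟨_, p, hp, rfl⟩ ⟨_, p, hp, rfl⟩
    (by rintro _ ⟨i, hi, rfl⟩ _ ⟨j, hj, rfl⟩; exact hle i hi j hj)
  exact ⟨s, c, fun i hi => ⟨hc1 ⟨i, hi, rfl⟩, hc2 ⟨i, hi, rfl⟩⟩⟩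

section geom

variable {E : Type*} [NormedAddCommGroup E] [InnerProductSpace ℝ E]

/-- maximum of a functional on a set -/
def supF (f : E →L[ℝ] ℝ) (A : Set E) : ℝ := sSup (f '' A)
/-- minimum of a functional on a set -/
def infF (f : E →L[ℝ] ℝ) (A : Set E) : ℝ := sInf (f '' A)

theorem supF_mem (f : E →L[ℝ] ℝ) {A : Set E} (hA : A.Nonempty) (hc : IsCompact A) :
    ∃ a ∈ A, f a = supF f A :=
  (hc.image f.continuous).sSup_mem (hA.image f)

theorem infF_mem (f : E →L[ℝ] ℝ) {A : Set E} (hA : A.Nonempty) (hc : IsCompact A) :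
    ∃ a ∈ A, f a = infF f A :=
  (hc.image f.continuous).sInf_mem (hA.image f)

theorem le_supF (f : E →L[ℝ] ℝ) {A : Set E} (hc : IsCompact A) {a : E} (ha : a ∈ A) :
    f a ≤ supF f A :=
  le_csSup (hc.image f.continuous).bddAbove ⟨a, ha, rfl⟩

theorem infF_le (f : E →L[ℝ] ℝ) {A : Set E} (hc : IsCompact A) {a : E} (ha : a ∈ A) :
    infF f A ≤ f a :=
  csInf_le (hc.image f.continuous).bddBelow ⟨a, ha, rfl⟩

theorem slp_sup (φ ψ : E →L[ℝ] ℝ) {A : Set E} (hA : A.Nonempty) (hc : IsCompact A) :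
    Slp (fun s => supF (ψ - s • φ) A) (infF φ A) (supF φ A) := by
  intro s s' hs
  obtain ⟨a, ha, ha'⟩ := supF_mem (ψ - s • φ) hA hc
  obtain ⟨b, hb, hb'⟩ := supF_mem (ψ - s' • φ) hA hc
  have h1 := le_supF (ψ - s' • φ) hc ha
  have h2 := le_supF (ψ - s • φ) hc hb
  have h3 := le_supF φ hc ha
  have h4 := infF_le φ hc hb
  simp only [← ha', ← hb'] at *
  simp at *
  constructor <;> nlinarith

theorem slp_inf (φ ψ : E →L[ℝ] ℝ) {A : Set E} (hA : A.Nonempty) (hc : IsCompact A) :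
    Slp (fun s => infF (ψ - s • φ) A) (infF φ A) (supF φ A) := by
  intro s s' hs
  obtain ⟨a, ha, ha'⟩ := infF_mem (ψ - s • φ) hA hc
  obtain ⟨b, hb, hb'⟩ := infF_mem (ψ - s' • φ) hA hc
  have h1 := infF_le (ψ - s' • φ) hc ha
  have h2 := infF_le (ψ - s • φ) hc hb
  have h3 := le_supF φ hc hb
  have h4 := infF_le φ hc ha
  simp only [← ha', ← hb'] at *
  simp at *
  constructor <;> nlinarith

theorem hits (f : E →L[ℝ] ℝ) {A : Set E} (hA : A.Nonempty) (hc : IsCompact A)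
    (hcv : Convex ℝ A) {c : ℝ} (h1 : infF f A ≤ c) (h2 : c ≤ supF f A) : ∃ a ∈ A, f a = c := by
  obtain ⟨a, ha, ha'⟩ := infF_mem f hA hc
  obtain ⟨b, hb, hb'⟩ := supF_mem f hA hc
  obtain ⟨x, hx, hx'⟩ := hcv.isPreconnected.intermediate_value ha hb f.continuous.continuousOn
    (show c ∈ Set.Icc _ _ from ⟨ha' ▸ h1, hb' ▸ h2⟩)
  exact ⟨x, hx, hx'⟩

theorem hyper [FiniteDimensional ℝ E] (f : E →L[ℝ] ℝ) (hf : f ≠ 0) (c : ℝ) : ∃ H : AffineSubspace ℝ E,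
    Module.finrank ℝ H.direction = Module.finrank ℝ E - 1 ∧ ∀ x, f x = c → x ∈ H := by
  have hf' : (f : E →ₗ[ℝ] ℝ) ≠ 0 := fun h => hf (by ext x; exact LinearMap.congr_fun h x)
  obtain ⟨p, hp⟩ := LinearMap.surjective hf' c
  refine ⟨AffineSubspace.mk' p (LinearMap.ker (f : E →ₗ[ℝ] ℝ)), ?_, fun x hx => ?_⟩
  · rw [AffineSubspace.direction_mk']
    have := Module.Dual.finrank_ker_add_one_of_ne_zero hf'
    omega
  · rw [AffineSubspace.mem_mk', LinearMap.mem_ker]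
    simp at hp
    simp [hx, hp]

theorem hull_ne (G : Set (Set E)) (A : Set E) (hAG : A ∈ G) (f : E →L[ℝ] ℝ) (a : E) (ha : a ∈ A)
    (h : ∀ B ∈ G, B ≠ A → ∀ b ∈ B, f b < f a) :
    convexHull ℝ (⋃₀ G) ≠ convexHull ℝ (⋃₀ (G \ {A})) := by
  intro heq
  have h1 : a ∈ convexHull ℝ (⋃₀ G) := subset_convexHull _ _ ⟨A, hAG, ha⟩
  rw [heq] at h1
  have h2 : convexHull ℝ (⋃₀ (G \ {A})) ⊆ {x | f x < f a} := by
    apply convexHull_min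
    · rintro x ⟨B, ⟨hB, hBA⟩, hx⟩
      exact h B hB hBA x hx
    · exact convex_halfSpace_lt f.toLinearMap.isLinear _
  exact lt_irrefl (f a) (h2 h1)

theorem main_geom (t n : ℕ) (ht : 2 ≤ t) : ∃ N : ℕ, ∀ (T : Finset ℕ), N ≤ T.card →
    ∀ (A : ℕ → Set E) (φ ψ : E →L[ℝ] ℝ), (∀ s : ℝ, ψ - s • φ ≠ 0) →
    (∀ i, (A i).Nonempty ∧ IsCompact (A i) ∧ Convex ℝ (A i)) →
    (∀ i ∈ T, ∀ j ∈ T, i < j → supF φ (A i) < infF φ (A j)) →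
    (∃ S ⊆ T, S.card = t ∧ ∃ (f : E →L[ℝ] ℝ) (c : ℝ), f ≠ 0 ∧
      ∀ i ∈ S, infF f (A i) ≤ c ∧ c ≤ supF f (A i)) ∨
    (∃ S ⊆ T, S.card = n ∧ ∀ j ∈ S, ∃ (f : E →L[ℝ] ℝ), ∃ a ∈ A j,
      ∀ i ∈ S, i ≠ j → ∀ b ∈ A i, f b < f a) := by
  classical
  obtain ⟨N, hN⟩ := ramsey_lists 3 (max t n)
  refine ⟨N, fun T hT A φ ψ hne hA hsep => ?_⟩
  let u : ℕ → ℝ → ℝ := fun i s => supF (ψ - s • φ) (A i)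
  let l : ℕ → ℝ → ℝ := fun i s => infF (ψ - s • φ) (A i)
  have hus : ∀ i, Slp (u i) (infF φ (A i)) (supF φ (A i)) := fun i => slp_sup φ ψ (hA i).1 (hA i).2.1
  have hls : ∀ i, Slp (l i) (infF φ (A i)) (supF φ (A i)) := fun i => slp_inf φ ψ (hA i).1 (hA i).2.1
  have hlu : ∀ i s, l i s ≤ u i s := fun i s => by
    obtain ⟨a, ha⟩ := (hA i).1
    exact (infF_le _ (hA i).2.1 ha).trans (le_supF _ (hA i).2.1 ha)
  let Cap : ℕ → ℕ → ℕ → Prop := fun i j k => ∃ s, u i s < u j s ∧ u k s < u j s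
  let Cup : ℕ → ℕ → ℕ → Prop := fun i j k => ∃ s, l j s < l i s ∧ l j s < l k s
  let c : List ℕ → Fin 3 := fun L => match L with
    | [i, j, k] => if Cap i j k then 0 else if Cup i j k then 1 else 2
    | _ => 0
  obtain ⟨S, hST, hSc, κ, hκ⟩ := hN T hT c
  have hcol : ∀ i ∈ S, ∀ j ∈ S, ∀ k ∈ S, i < j → j < k →
      (if Cap i j k then (0 : Fin 3) else if Cup i j k then 1 else 2) = κ := by
    intro i hi j hj k hk hij hjk
    refine hκ [i, j, k] ?_ ?_ rfl
    · simp [hij, hjk, hij.trans hjk]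
    · simp [hi, hj, hk]
  have h3 : κ = 0 ∨ κ = 1 ∨ κ = 2 := by fin_cases κ <;> simp
  rcases h3 with rfl | rfl | rfl
  · right
    obtain ⟨R, hR, hRc⟩ := Finset.exists_subset_card_eq (show n ≤ S.card by omega)
    refine ⟨R, hR.trans hST, hRc, fun j hj => ?_⟩
    obtain ⟨s, hs⟩ := cap_lemma R u _ _ hus
      (fun i hi j hj => hsep i (hST (hR hi)) j (hST (hR hj)))
      (fun i hi j hj k hk hij hjk => by
        have := hcol i (hR hi) j (hR hj) k (hR hk) hij hjk
        split_ifs at this with h1 h2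
        · exact h1
        · simp at this
        · simp at this) j hj
    obtain ⟨a, ha, ha'⟩ := supF_mem (ψ - s • φ) (hA j).1 (hA j).2.1
    refine ⟨ψ - s • φ, a, ha, fun i hi hij b hb => ?_⟩
    have h1 := le_supF (ψ - s • φ) (hA i).2.1 hb
    have h2 : supF (ψ - s • φ) (A i) < supF (ψ - s • φ) (A j) := hs i hi hij
    linarith
  · right
    obtain ⟨R, hR, hRc⟩ := Finset.exists_subset_card_eq (show n ≤ S.card by omega)
    refine ⟨R, hR.trans hST, hRc, fun j hj => ?_⟩
    obtain ⟨s, hs⟩ := cap_lemma R (fun i s => - l i (-s)) _ _ (fun i => (hls i).neg)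
      (fun i hi j hj => hsep i (hST (hR hi)) j (hST (hR hj)))
      (fun i hi j hj k hk hij hjk => by
        have := hcol i (hR hi) j (hR hj) k (hR hk) hij hjk
        split_ifs at this with h1 h2
        · simp at this
        · obtain ⟨s, hs⟩ := h2
          exact ⟨-s, by simpa using hs⟩
        · simp at this) j hj
    obtain ⟨a, ha, ha'⟩ := infF_mem (ψ - (-s) • φ) (hA j).1 (hA j).2.1
    refine ⟨-(ψ - (-s) • φ), a, ha, fun i hi hij b hb => ?_⟩
    have h1 := infF_le (ψ - (-s) • φ) (hA i).2.1 hb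
    have h2 : - infF (ψ - (-s) • φ) (A i) < - infF (ψ - (-s) • φ) (A j) := hs i hi hij
    rw [_root_.neg_apply, _root_.neg_apply]
    linarith
  · left
    obtain ⟨R, hR, hRc⟩ := Finset.exists_subset_card_eq (show t ≤ S.card by omega)
    have hcc : ∀ i ∈ R, ∀ j ∈ R, ∀ k ∈ R, i < j → j < k → ¬ Cap i j k ∧ ¬ Cup i j k := by
      intro i hi j hj k hk hij hjk
      have := hcol i (hR hi) j (hR hj) k (hR hk) hij hjk
      split_ifs at this with h1 h2
      · simp at this
      · simp at this
      · exact ⟨h1, h2⟩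
    obtain ⟨s, c, hsc⟩ := transversal_lemma R (by omega) u l _ _ hus hls
      (fun i hi j hj => hsep i (hST (hR hi)) j (hST (hR hj))) hlu
      (fun i hi j hj k hk hij hjk s => by
        by_contra h
        push Not at h
        exact (hcc i hi j hj k hk hij hjk).1 ⟨s, h⟩)
      (fun i hi j hj k hk hij hjk s => by
        by_contra h
        push Not at h
        exact (hcc i hi j hj k hk hij hjk).2 ⟨s, h⟩)
    exact ⟨R, hR.trans hST, hRc, ψ - s • φ, c, hne s, hsc⟩

theorem main_geom2 (t n : ℕ) (ht : 2 ≤ t) : ∃ N : ℕ, ∀ (T : Finset ℕ), N ≤ T.card →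
    ∀ (A : ℕ → Set E) (φ ψ : E →L[ℝ] ℝ), φ ≠ 0 → (∀ s : ℝ, ψ - s • φ ≠ 0) →
    (∀ i, (A i).Nonempty ∧ IsCompact (A i) ∧ Convex ℝ (A i)) →
    (∃ S ⊆ T, S.card = t ∧ ∃ (f : E →L[ℝ] ℝ) (c : ℝ), f ≠ 0 ∧
      ∀ i ∈ S, infF f (A i) ≤ c ∧ c ≤ supF f (A i)) ∨
    (∃ S ⊆ T, S.card = n ∧ ∀ j ∈ S, ∃ (f : E →L[ℝ] ℝ), ∃ a ∈ A j,
      ∀ i ∈ S, i ≠ j → ∀ b ∈ A i, f b < f a) := by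
  classical
  obtain ⟨N', hN'⟩ := main_geom (E := E) t n ht
  obtain ⟨N, hN⟩ := ramsey_lists 2 (max t N')
  refine ⟨N, fun T hT A φ ψ hφ hne hA => ?_⟩
  let c : List ℕ → Fin 3 := fun L => match L with
    | [i, j] => if supF φ (A i) < infF φ (A j) then 0 else
        if supF φ (A j) < infF φ (A i) then 1 else 2
    | _ => 0
  obtain ⟨S, hST, hSc, κ, hκ⟩ := hN T hT c
  have hcol : ∀ i ∈ S, ∀ j ∈ S, i < j →
      (if supF φ (A i) < infF φ (A j) then (0 : Fin 3) else
        if supF φ (A j) < infF φ (A i) then 1 else 2) = κ := by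
    intro i hi j hj hij
    refine hκ [i, j] ?_ ?_ rfl
    · simp [hij]
    · simp [hi, hj]
  have h3 : κ = 0 ∨ κ = 1 ∨ κ = 2 := by fin_cases κ <;> simp
  have hNS : N' ≤ S.card := by omega
  rcases h3 with rfl | rfl | rfl
  · have := hN' S hNS A φ ψ hne hA (fun i hi j hj hij => by
      have := hcol i hi j hj hij
      split_ifs at this with h1 h2
      · exact h1
      · simp at this
      · simp at this)
    rcases this with ⟨R, hR, h⟩ | ⟨R, hR, h⟩
    · exact Or.inl ⟨R, hR.trans hST, h⟩
    · exact Or.inr ⟨R, hR.trans hST, h⟩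
  · have := hN' S hNS A (-φ) ψ (fun s => by rw [smul_neg, ← neg_smul]; exact hne (-s)) hA (fun i hi j hj hij => by
      have := hcol i hi j hj hij
      split_ifs at this with h1 h2
      · simp at this
      · obtain ⟨a, ha, ha'⟩ := supF_mem (-φ) (hA i).1 (hA i).2.1
        obtain ⟨b, hb, hb'⟩ := infF_mem (-φ) (hA j).1 (hA j).2.1
        have := infF_le φ (hA i).2.1 ha
        have := le_supF φ (hA j).2.1 hb
        rw [← ha', ← hb']
        rw [_root_.neg_apply, _root_.neg_apply]
        linarith
      · simp at this)
    rcases this with ⟨R, hR, h⟩ | ⟨R, hR, h⟩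
    · exact Or.inl ⟨R, hR.trans hST, h⟩
    · exact Or.inr ⟨R, hR.trans hST, h⟩
  · left
    obtain ⟨R, hR, hRc⟩ := Finset.exists_subset_card_eq (show t ≤ S.card by omega)
    obtain ⟨p, hp⟩ : R.Nonempty := Finset.card_pos.mp (by omega)
    have hh : ∀ i ∈ R, ∀ j ∈ R, i < j →
        infF φ (A i) ≤ supF φ (A j) ∧ infF φ (A j) ≤ supF φ (A i) := by
      intro i hi j hj hij
      have := hcol i (hR hi) j (hR hj) hij
      split_ifs at this with h1 h2
      · simp at this
      · simp at this
      · exact ⟨not_lt.mp h2, not_lt.mp h1⟩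
    obtain ⟨c, hc1, hc2⟩ := exists_between_of_forall_le
      (s := {x | ∃ i ∈ R, infF φ (A i) = x}) (t := {x | ∃ i ∈ R, supF φ (A i) = x})
      ⟨_, p, hp, rfl⟩ ⟨_, p, hp, rfl⟩ (by
        rintro _ ⟨i, hi, rfl⟩ _ ⟨j, hj, rfl⟩
        rcases lt_trichotomy i j with h | h | h
        · exact (hh i hi j hj h).1
        · subst h
          obtain ⟨a, ha⟩ := (hA i).1
          exact (infF_le _ (hA i).2.1 ha).trans (le_supF _ (hA i).2.1 ha)
        · exact (hh j hj i hi h).2)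
    exact ⟨R, hR.trans hST, hRc, φ, c, hφ, fun i hi => ⟨hc1 ⟨i, hi, rfl⟩, hc2 ⟨i, hi, rfl⟩⟩⟩

end geom

/-- Among sufficiently many convex bodies in `ℝ^d` there are `t` with a common
transversal hyperplane or `n` in convex position. -/
theorem hyperplane_transversal_or_convex_position :
    ∀ d t n : ℕ, 2 ≤ d → 3 ≤ t → 3 ≤ n →
    ∃ h : ℕ, ∀ F : Set (Set (EuclideanSpace ℝ (Fin d))), F.Finite → h < F.ncard →
      (∀ A ∈ F, A.Nonempty ∧ IsCompact A ∧ Convex ℝ A) →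
      (∃ G ⊆ F, G.ncard = t ∧ ∃ H : AffineSubspace ℝ (EuclideanSpace ℝ (Fin d)),
        Module.finrank ℝ H.direction = d - 1 ∧
        ∀ A ∈ G, ((H : Set (EuclideanSpace ℝ (Fin d))) ∩ A).Nonempty) ∨
      (∃ G ⊆ F, G.ncard = n ∧
        ∀ A ∈ G, convexHull ℝ (⋃₀ G) ≠ convexHull ℝ (⋃₀ (G \ {A}))) := by
  classical
  intro d t n hd ht hn
  obtain ⟨N, hN⟩ := main_geom2 (E := EuclideanSpace ℝ (Fin d)) t n (by omega)
  refine ⟨N, fun F hF hcard hA => ?_⟩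
  -- enumerate the family
  have hne : F.Nonempty := Set.nonempty_of_ncard_ne_zero (by omega)
  obtain ⟨A0, hA0⟩ := hne
  have hcard' : hF.toFinset.card = F.ncard := (Set.ncard_eq_toFinset_card F hF).symm
  let e := hF.toFinset.equivFin
  let A : ℕ → Set (EuclideanSpace ℝ (Fin d)) := fun i =>
    if h : i < hF.toFinset.card then (e.symm ⟨i, h⟩ : Set (EuclideanSpace ℝ (Fin d))) else A0
  have hAF : ∀ i, A i ∈ F := by
    intro i
    by_cases h : i < hF.toFinset.card
    · simp only [A, dif_pos h]
      exact hF.mem_toFinset.mp (e.symm ⟨i, h⟩).2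
    · simp only [A, dif_neg h]
      exact hA0
  have hinj : ∀ i ∈ Finset.range hF.toFinset.card, ∀ j ∈ Finset.range hF.toFinset.card,
      A i = A j → i = j := by
    intro i hi j hj hij
    rw [Finset.mem_range] at hi hj
    simp only [A, dif_pos hi, dif_pos hj] at hij
    have := e.symm.injective (Subtype.ext hij)
    simpa using this
  let φ : EuclideanSpace ℝ (Fin d) →L[ℝ] ℝ := EuclideanSpace.proj (⟨0, by omega⟩ : Fin d)
  let ψ : EuclideanSpace ℝ (Fin d) →L[ℝ] ℝ := EuclideanSpace.proj (⟨1, by omega⟩ : Fin d)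
  have hφ : φ ≠ 0 := by
    intro h
    have := DFunLike.congr_fun h (EuclideanSpace.single (⟨0, by omega⟩ : Fin d) (1 : ℝ))
    simp [φ] at this
  have hψ : ∀ s : ℝ, ψ - s • φ ≠ 0 := by
    intro s h
    have := DFunLike.congr_fun h (EuclideanSpace.single (⟨1, by omega⟩ : Fin d) (1 : ℝ))
    simp [φ, ψ] at this
  have himg : ∀ S ⊆ Finset.range hF.toFinset.card,
      (A '' (S : Set ℕ)).ncard = S.card := by
    intro S hS
    rw [Set.InjOn.ncard_image, Set.ncard_coe_finset]
    intro i hi j hj hij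
    exact hinj i (hS hi) j (hS hj) hij
  have hsub : ∀ S : Finset ℕ, A '' (S : Set ℕ) ⊆ F := by
    rintro S _ ⟨i, -, rfl⟩
    exact hAF i
  rcases hN (Finset.range hF.toFinset.card) (by rw [Finset.card_range]; omega) A φ ψ hφ hψ
    (fun i => hA _ (hAF i)) with ⟨S, hS, hSc, f, c, hf, hfc⟩ | ⟨S, hS, hSc, h⟩
  · left
    obtain ⟨H, hH1, hH2⟩ := hyper f hf c
    refine ⟨A '' (S : Set ℕ), hsub S, (himg S hS).trans hSc, H, by simpa using hH1, ?_⟩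
    rintro _ ⟨i, hi, rfl⟩
    obtain ⟨h1, h2, h3⟩ := hA _ (hAF i)
    obtain ⟨a, ha, ha'⟩ := hits f h1 h2 h3 (hfc i hi).1 (hfc i hi).2
    exact ⟨a, hH2 a ha', ha⟩
  · right
    refine ⟨A '' (S : Set ℕ), hsub S, (himg S hS).trans hSc, ?_⟩
    rintro _ ⟨j, hj, rfl⟩
    obtain ⟨f, a, ha, hfa⟩ := h j hj
    refine hull_ne _ _ ⟨j, hj, rfl⟩ f a ha ?_
    rintro _ ⟨i, hi, rfl⟩ hne b hb
    exact hfa i hi (fun h => hne (by rw [h])) b hb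
end
end
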